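/- Let ‖·‖ be a decomposable norm whose unit-ball extreme points have unit ‖·‖_u-norm, let b = Ax₀ + z, k₀ = K(x₀), c = max_{x ∈ T_{x₀} \ {0}} ‖x‖²/(k₀‖x‖_u²). Suppose Assumption 1 holds with constants r > 1, δ ∈ (0, 1/4], γ, and that λ ≥ λ_tgt. If φ_λ(x) − φ_λ(x₀) ≤ 3 c k₀ δ λ² (1+γ) / (2 ρ₋(A, c(1+γ)² k₀)), then max{ (1/(2λ)) ‖A(x − x₀)‖₂², ‖x − x₀‖ } ≤ 9 c k₀ λ (1+γ) / (2 ρ₋(A, c(1+γ)² k₀)). -/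

import Mathlib

/-! Write `h = x - x₀ = t + w` with `t ∈ T = T x₀` and `w` in the `B`-orthogonal complement `Tᗮ`.

The structural input is that orthogonal projection onto `Tᗮ` does not increase the dual norm
(`proj_dual_le`). It rests on `maximizer_mem_perp`: if `v ∈ Tᗮ` has dual norm one, then an extreme
point `a` of the unit ball with `⟪v, a⟫ = 1` itself lies in `Tᗮ`. As extreme points have unit
`‖·‖ᵤ`-norm, `‖·‖ᵤ ≤ N`, so `a` is a subgradient of `N` at `a` and the distinguished vector of `a`
is `a`; comparing the subgradients `v`, `e x₀ + v` of `N` at `a` gives `e x₀ ∈ (T a)ᗮ`, hence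
`a ± e x₀` are in the dual ball, which forces `a + e x₀ ∈ ∂N(x₀)` and so `a ∈ Tᗮ`.

Consequently there is `v ∈ Tᗮ` in the dual ball with `⟪v, w⟫ = N w`, and the subgradient
`e x₀ + v` yields `N x - N x₀ ≥ ⟪e x₀, t⟫ + N w`. Expanding the least-squares term, this gives
`½‖A h‖² + λ (⟪e x₀, t⟫ + N w) ≤ Δ + ‖A*z‖* N h`, with `Δ` the bound on the objective gap.

If `Δ ≤ δ λ N h`, then `N w ≤ γ N t`, so `h` is in the cone on which the restricted eigenvalue bound
holds, and `ρ₋ N(t)² ≤ c k₀ ‖A h‖² ≤ 3 c k₀ λ N t`. Otherwise `N h < Δ / (δ λ)` is already small,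
and the bound on `‖A h‖` follows from `|⟪e x₀, t⟫| ≤ N h`. -/

open Matrix

namespace PGH

variable {n m : ℕ}

/-- The inner product `⟪x, y⟫ = xᵀ B y` on `ℝⁿ` induced by a matrix `B`. -/
def ip (B : Matrix (Fin n) (Fin n) ℝ) (x y : Fin n → ℝ) : ℝ :=
  dotProduct x (B.mulVec y)

/-- The norm `‖x‖ᵤ = √(xᵀ B x)` induced by the inner product. -/
noncomputable def normu (B : Matrix (Fin n) (Fin n) ℝ) (x : Fin n → ℝ) : ℝ :=
  Real.sqrt (ip B x x)

/-- `N` is a norm on `ℝⁿ`. -/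
structure IsNorm (N : (Fin n → ℝ) → ℝ) : Prop where
  nonneg : ∀ x, 0 ≤ N x
  eq_zero_iff : ∀ x, N x = 0 ↔ x = 0
  triangle : ∀ x y, N (x + y) ≤ N x + N y
  smul_eq : ∀ (c : ℝ) (x), N (c • x) = |c| * N x

/-- The dual norm `‖y‖* = sup {⟪y, x⟫ : N x ≤ 1}`. -/
noncomputable def dualNorm (B : Matrix (Fin n) (Fin n) ℝ) (N : (Fin n → ℝ) → ℝ)
    (y : Fin n → ℝ) : ℝ :=
  sSup ((fun x => ip B y x) '' {x | N x ≤ 1})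

/-- The subdifferential of `N` at `x` with respect to `⟪·,·⟫`. -/
def subdiff (B : Matrix (Fin n) (Fin n) ℝ) (N : (Fin n → ℝ) → ℝ) (x : Fin n → ℝ) :
    Set (Fin n → ℝ) :=
  {z | ∀ y, N x + ip B z (y - x) ≤ N y}

/-- The set `G` of extreme points of the unit ball of `N`. -/
def extPts (N : (Fin n → ℝ) → ℝ) : Set (Fin n → ℝ) :=
  Set.extremePoints ℝ {x | N x ≤ 1}

/-- The orthogonal complement (w.r.t. `⟪·,·⟫`) of a subspace `T`, as a set. -/
def perp (B : Matrix (Fin n) (Fin n) ℝ) (T : Submodule ℝ (Fin n → ℝ)) :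
    Set (Fin n → ℝ) :=
  {v | ∀ u ∈ T, ip B u v = 0}

/-- A decomposability structure for the norm `N`: for every `x` there are a subspace `T x`
and a vector `e x ∈ T x` with `∂N(x) = {e x + v : v ∈ (T x)ᗮ, ‖v‖* ≤ 1}`. -/
structure DecompStruct (B : Matrix (Fin n) (Fin n) ℝ) (N : (Fin n → ℝ) → ℝ) where
  T : (Fin n → ℝ) → Submodule ℝ (Fin n → ℝ)
  e : (Fin n → ℝ) → (Fin n → ℝ)
  e_mem : ∀ x, e x ∈ T x
  subdiff_eq : ∀ x, subdiff B N x =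
    {ξ | ∃ v ∈ perp B (T x), dualNorm B N v ≤ 1 ∧ ξ = e x + v}

/-- `K x = ‖e x‖ᵤ²`. -/
noncomputable def Kfun (B : Matrix (Fin n) (Fin n) ℝ) (N : (Fin n → ℝ) → ℝ)
    (D : DecompStruct B N) (x : Fin n → ℝ) : ℝ :=
  (normu B (D.e x)) ^ 2

/-- Squared Euclidean norm `‖v‖₂²` on `ℝᵐ`. -/
def sq2 (v : Fin m → ℝ) : ℝ := dotProduct v v

/-- The least-squares loss `f(x) = ½ ‖A x - b‖₂²`. -/
noncomputable def fls (A : Matrix (Fin m) (Fin n) ℝ) (b : Fin m → ℝ) (x : Fin n → ℝ) : ℝ :=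
  (1 / 2) * sq2 (A.mulVec x - b)

/-- The adjoint `A* = B⁻¹ Aᵀ` of `A` w.r.t. `⟪·,·⟫`. -/
noncomputable def Astar (B : Matrix (Fin n) (Fin n) ℝ) (A : Matrix (Fin m) (Fin n) ℝ) :
    Matrix (Fin n) (Fin m) ℝ := B⁻¹ * Aᵀ

/-- The gradient `∇f(x) = A*(A x - b)` of the least-squares loss w.r.t. `⟪·,·⟫`. -/
noncomputable def gradf (B : Matrix (Fin n) (Fin n) ℝ) (A : Matrix (Fin m) (Fin n) ℝ)
    (b : Fin m → ℝ) (x : Fin n → ℝ) : Fin n → ℝ :=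
  (Astar B A).mulVec (A.mulVec x - b)

/-- `ρ` is a valid lower restricted isometry constant of `A` at level `k`. -/
def IsLowerRIP (B : Matrix (Fin n) (Fin n) ℝ) (N : (Fin n → ℝ) → ℝ)
    (A : Matrix (Fin m) (Fin n) ℝ) (k ρ : ℝ) : Prop :=
  0 < ρ ∧ ∀ x : Fin n → ℝ, (N x) ^ 2 ≤ k * (normu B x) ^ 2 →
    ρ * (normu B x) ^ 2 ≤ sq2 (A.mulVec x)

/-- `ρ` is a valid upper restricted isometry constant of `A` at level `k`. -/
def IsUpperRIP (B : Matrix (Fin n) (Fin n) ℝ) (N : (Fin n → ℝ) → ℝ)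
    (A : Matrix (Fin m) (Fin n) ℝ) (k ρ : ℝ) : Prop :=
  0 < ρ ∧ ∀ x : Fin n → ℝ, (N x) ^ 2 ≤ k * (normu B x) ^ 2 →
    sq2 (A.mulVec x) ≤ ρ * (normu B x) ^ 2

/-- The regularized objective `φ_λ(x) = f(x) + λ N(x)`. -/
noncomputable def phi (A : Matrix (Fin m) (Fin n) ℝ) (b : Fin m → ℝ)
    (N : (Fin n → ℝ) → ℝ) (lam : ℝ) (x : Fin n → ℝ) : ℝ :=
  fls A b x + lam * N x

/-- The proximal model `m_{λ,L}(y, x)`. -/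
noncomputable def mdl (B : Matrix (Fin n) (Fin n) ℝ) (A : Matrix (Fin m) (Fin n) ℝ)
    (b : Fin m → ℝ) (N : (Fin n → ℝ) → ℝ) (lam L : ℝ) (y x : Fin n → ℝ) : ℝ :=
  fls A b y + ip B (gradf B A b y) (x - y) + (L / 2) * (normu B (x - y)) ^ 2 + lam * N x

/-- `xp = Prox_{λ,L}(y)`, i.e. `xp` minimizes `m_{λ,L}(y, ·)`. -/
def IsProx (B : Matrix (Fin n) (Fin n) ℝ) (A : Matrix (Fin m) (Fin n) ℝ)
    (b : Fin m → ℝ) (N : (Fin n → ℝ) → ℝ) (lam L : ℝ) (y xp : Fin n → ℝ) : Prop :=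
  ∀ u, mdl B A b N lam L y xp ≤ mdl B A b N lam L y u

/-- `ω_λ(x) = min_{ξ ∈ ∂N(x)} ‖λ ξ + ∇f(x)‖*`. -/
noncomputable def omega (B : Matrix (Fin n) (Fin n) ℝ) (A : Matrix (Fin m) (Fin n) ℝ)
    (b : Fin m → ℝ) (N : (Fin n → ℝ) → ℝ) (lam : ℝ) (x : Fin n → ℝ) : ℝ :=
  sInf ((fun ξ => dualNorm B N (lam • ξ + gradf B A b x)) '' subdiff B N x)

/-- Assumption 1 of the paper, phrased for given valid restricted isometry constants
`ρlow = ρ₋(A, c k₀ (1+γ)²)`, `ρlow2 = ρ₋(A, 72 r c k₀ (1+γ) γinc)` and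
`ρup2 = ρ₊(A, 72 r c k₀ (1+γ) γinc)`. -/
def Assumption1 (B : Matrix (Fin n) (Fin n) ℝ) (N : (Fin n → ℝ) → ℝ)
    (A : Matrix (Fin m) (Fin n) ℝ) (z : Fin m → ℝ)
    (c k₀ γinc lamtgt r δ γ ρlow ρlow2 ρup2 : ℝ) : Prop :=
  dualNorm B N ((Astar B A).mulVec z) ≤ lamtgt / 4 ∧
  1 < r ∧ 0 < δ ∧ δ ≤ 1 / 4 ∧
  γ = (lamtgt * (1 + δ) + dualNorm B N ((Astar B A).mulVec z)) /
      (lamtgt * (1 - δ) - dualNorm B N ((Astar B A).mulVec z)) ∧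
  IsLowerRIP B N A (c * k₀ * (1 + γ) ^ 2) ρlow ∧
  IsLowerRIP B N A (72 * r * c * k₀ * (1 + γ) * γinc) ρlow2 ∧
  IsUpperRIP B N A (72 * r * c * k₀ * (1 + γ) * γinc) ρup2 ∧
  ρlow / ρup2 > c / r

/-- One backtracking step: `M` is the smallest element of `{Lt γinc^j : j ≥ 0}`
for which the proximal point is accepted, and `xt1` is that proximal point. -/
def BacktrackMin (B : Matrix (Fin n) (Fin n) ℝ) (A : Matrix (Fin m) (Fin n) ℝ)
    (b : Fin m → ℝ) (N : (Fin n → ℝ) → ℝ) (lam γinc Lt : ℝ)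
    (xt : Fin n → ℝ) (M : ℝ) (xt1 : Fin n → ℝ) : Prop :=
  (∃ j : ℕ, M = Lt * γinc ^ j) ∧
  IsProx B A b N lam M xt xt1 ∧
  phi A b N lam xt1 ≤ mdl B A b N lam M xt xt1 ∧
  ∀ j : ℕ, Lt * γinc ^ j < M →
    ∀ u, IsProx B A b N lam (Lt * γinc ^ j) xt u →
      ¬ phi A b N lam u ≤ mdl B A b N lam (Lt * γinc ^ j) xt u

/-- The iterates of the proximal-gradient subroutine with backtracking. -/
structure ProxGradSeq (B : Matrix (Fin n) (Fin n) ℝ) (A : Matrix (Fin m) (Fin n) ℝ)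
    (b : Fin m → ℝ) (N : (Fin n → ℝ) → ℝ) (lam γinc γdec Lmin : ℝ)
    (x : ℕ → Fin n → ℝ) (L M : ℕ → ℝ) : Prop where
  step : ∀ t, BacktrackMin B A b N lam γinc (L t) (x t) (M (t + 1)) (x (t + 1))
  Lupdate : ∀ t, L (t + 1) = max Lmin (M (t + 1) / γdec)

/-- The quantity `‖M (x⁻ - x) + ∇f(x) - ∇f(x⁻)‖*` used in the stopping criterion. -/
noncomputable def stopQ (B : Matrix (Fin n) (Fin n) ℝ) (A : Matrix (Fin m) (Fin n) ℝ)
    (b : Fin m → ℝ) (N : (Fin n → ℝ) → ℝ) (Mt : ℝ) (xprev xcur : Fin n → ℝ) : ℝ :=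
  dualNorm B N (Mt • (xprev - xcur) + (gradf B A b xcur - gradf B A b xprev))

/-! ### The inner product -/

section Inner

variable {B : Matrix (Fin n) (Fin n) ℝ}

lemma ip_eq (x y : Fin n → ℝ) : ip B x y = Matrix.toBilin' B x y := by
  rw [Matrix.toBilin'_apply']; rfl

lemma ip_add_left (x y z : Fin n → ℝ) : ip B (x + y) z = ip B x z + ip B y z := by
  simp [ip_eq]

lemma ip_add_right (x y z : Fin n → ℝ) : ip B x (y + z) = ip B x y + ip B x z := by
  simp [ip_eq]

lemma ip_sub_left (x y z : Fin n → ℝ) : ip B (x - y) z = ip B x z - ip B y z := by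
  simp [ip_eq]

lemma ip_sub_right (x y z : Fin n → ℝ) : ip B x (y - z) = ip B x y - ip B x z := by
  simp [ip_eq]

lemma ip_neg_left (x y : Fin n → ℝ) : ip B (-x) y = -ip B x y := by
  simp [ip_eq]

lemma ip_neg_right (x y : Fin n → ℝ) : ip B x (-y) = -ip B x y := by
  simp [ip_eq]

lemma ip_smul_left (c : ℝ) (x y : Fin n → ℝ) : ip B (c • x) y = c * ip B x y := by
  simp [ip_eq]

lemma ip_smul_right (c : ℝ) (x y : Fin n → ℝ) : ip B x (c • y) = c * ip B x y := by
  simp [ip_eq]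

lemma ip_zero_left (y : Fin n → ℝ) : ip B 0 y = 0 := by simp [ip_eq]

lemma ip_zero_right (y : Fin n → ℝ) : ip B y 0 = 0 := by simp [ip_eq]

lemma ip_comm (hB : B.PosDef) (x y : Fin n → ℝ) : ip B x y = ip B y x := by
  have h : Bᵀ = B := by simpa using hB.isHermitian.eq
  unfold ip
  rw [dotProduct_mulVec, ← mulVec_transpose, h, dotProduct_comm]

lemma ip_self_pos (hB : B.PosDef) {x : Fin n → ℝ} (hx : x ≠ 0) : 0 < ip B x x := by
  simpa [ip] using hB.dotProduct_mulVec_pos hx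

lemma ip_self_nonneg (hB : B.PosDef) (x : Fin n → ℝ) : 0 ≤ ip B x x := by
  by_cases hx : x = 0
  · simp [hx, ip_zero_left]
  · exact (ip_self_pos hB hx).le

lemma eq_zero_of_ip_self (hB : B.PosDef) {x : Fin n → ℝ} (h : ip B x x = 0) : x = 0 := by
  by_contra hx
  exact (ip_self_pos hB hx).ne' h

lemma normu_nonneg (x : Fin n → ℝ) : 0 ≤ normu B x := Real.sqrt_nonneg _

lemma normu_sq (hB : B.PosDef) (x : Fin n → ℝ) : normu B x ^ 2 = ip B x x :=
  Real.sq_sqrt (ip_self_nonneg hB x)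

/-- The Cauchy–Schwarz inequality. -/
lemma ip_le_normu (hB : B.PosDef) (x y : Fin n → ℝ) : ip B x y ≤ normu B x * normu B y := by
  by_cases hx : x = 0
  · simp [hx, ip_zero_left, normu]
  by_cases hy : y = 0
  · simp [hy, ip_zero_right, normu]
  have hx' : 0 < normu B x := Real.sqrt_pos.2 (ip_self_pos hB hx)
  have hy' : 0 < normu B y := Real.sqrt_pos.2 (ip_self_pos hB hy)
  have h := ip_self_nonneg hB (normu B y • x - normu B x • y)
  simp only [ip_sub_left, ip_sub_right, ip_smul_left, ip_smul_right, ip_comm hB y x] at h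
  rw [← normu_sq hB x, ← normu_sq hB y] at h
  have h2 : 0 ≤ (normu B x * normu B y) * (normu B x * normu B y - ip B x y) := by
    nlinarith
  have := nonneg_of_mul_nonneg_right h2 (mul_pos hx' hy')
  linarith

lemma mem_perp_add {T : Submodule ℝ (Fin n → ℝ)} {u v : Fin n → ℝ} (hu : u ∈ perp B T)
    (hv : v ∈ perp B T) : u + v ∈ perp B T := fun y hy => by
  rw [ip_add_right, hu y hy, hv y hy, add_zero]

lemma mem_perp_smul {T : Submodule ℝ (Fin n → ℝ)} (c : ℝ) {u : Fin n → ℝ}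
    (hu : u ∈ perp B T) : c • u ∈ perp B T := fun y hy => by
  rw [ip_smul_right, hu y hy, mul_zero]

lemma mem_perp_neg {T : Submodule ℝ (Fin n → ℝ)} {u : Fin n → ℝ}
    (hu : u ∈ perp B T) : -u ∈ perp B T := fun y hy => by
  rw [ip_neg_right, hu y hy, neg_zero]

lemma exists_decomp (hB : B.PosDef) (T : Submodule ℝ (Fin n → ℝ)) (h : Fin n → ℝ) :
    ∃ t ∈ T, ∃ w ∈ perp B T, h = t + w := by
  have hrefl : (Matrix.toBilin' B).IsRefl := by
    intro x y hxy
    rw [← ip_eq] at hxy ⊢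
    rw [ip_comm hB, hxy]
  have hdisj : Disjoint T ((Matrix.toBilin' B).orthogonal T) := by
    rw [Submodule.disjoint_def]
    intro x hx hx'
    apply eq_zero_of_ip_self hB
    rw [ip_eq]
    exact hx' x hx
  have hc := (LinearMap.BilinForm.isCompl_orthogonal_iff_disjoint hrefl).2 hdisj
  have hh : h ∈ T ⊔ (Matrix.toBilin' B).orthogonal T := by
    rw [hc.sup_eq_top]; trivial
  obtain ⟨t, ht, w, hw, rfl⟩ := Submodule.mem_sup.1 hh
  refine ⟨t, ht, w, fun u hu => ?_, rfl⟩
  rw [ip_eq]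
  exact hw u hu

lemma normu_le_of_orth (hB : B.PosDef) {t w : Fin n → ℝ} (h : ip B t w = 0) :
    normu B t ^ 2 ≤ normu B (t + w) ^ 2 := by
  rw [normu_sq hB, normu_sq hB, ip_add_left, ip_add_right, ip_add_right, ip_comm hB w t, h]
  linarith [ip_self_nonneg hB w]

lemma ip_Astar (hB : B.PosDef) (A : Matrix (Fin m) (Fin n) ℝ) (z : Fin m → ℝ)
    (h : Fin n → ℝ) : ip B ((Astar B A).mulVec z) h = dotProduct (A.mulVec h) z := by
  rw [ip_comm hB]
  unfold ip Astar
  have hu : IsUnit B.det := (Matrix.isUnit_iff_isUnit_det B).1 hB.isUnit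
  rw [mulVec_mulVec, ← Matrix.mul_assoc, Matrix.mul_nonsing_inv _ hu, Matrix.one_mul,
    dotProduct_mulVec, vecMul_transpose]

end Inner

/-! ### Norms and dual norms on `ℝⁿ` -/

section Norms

variable {B : Matrix (Fin n) (Fin n) ℝ} {N : (Fin n → ℝ) → ℝ}

lemma IsNorm.zero (hN : IsNorm N) : N 0 = 0 := (hN.eq_zero_iff 0).2 rfl

lemma IsNorm.neg (hN : IsNorm N) (x : Fin n → ℝ) : N (-x) = N x := by
  have := hN.smul_eq (-1) x
  simpa using this

lemma IsNorm.continuous (hN : IsNorm N) : Continuous N := by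
  have hc : ConvexOn ℝ Set.univ N := by
    refine ⟨convex_univ, fun x _ y _ a b ha hb _ => ?_⟩
    refine (hN.triangle _ _).trans ?_
    rw [hN.smul_eq, hN.smul_eq, abs_of_nonneg ha, abs_of_nonneg hb]
    rfl
  exact hc.locallyLipschitz.continuous

lemma IsNorm.isCompact_ball (hN : IsNorm N) : IsCompact {x | N x ≤ 1} := by
  rcases Nat.eq_zero_or_pos n with rfl | hn
  · exact (Set.subsingleton_of_subsingleton).isCompact
  have : Nonempty (Fin n) := ⟨⟨0, hn⟩⟩
  refine Metric.isCompact_of_isClosed_isBounded (isClosed_le hN.continuous continuous_const) ?_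
  -- The minimum of `N` on the unit sphere is positive and controls the ambient norm.
  obtain ⟨y, hy, hmin⟩ := (isCompact_sphere (0 : Fin n → ℝ) 1).exists_isMinOn
    (NormedSpace.sphere_nonempty.2 zero_le_one) hN.continuous.continuousOn
  have hy0 : y ≠ 0 := by
    rintro rfl
    simp at hy
  have hpos : 0 < N y := lt_of_le_of_ne (hN.nonneg y)
    (fun h => hy0 ((hN.eq_zero_iff y).1 h.symm))
  refine (Metric.isBounded_closedBall (x := (0 : Fin n → ℝ)) (r := 1 / N y)).subset ?_
  intro x hx
  rw [mem_closedBall_zero_iff]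
  by_cases hx0 : x = 0
  · simp [hx0, hpos.le]
  have hxn : 0 < ‖x‖ := norm_pos_iff.2 hx0
  have h1 : N y ≤ N (‖x‖⁻¹ • x) := by
    apply hmin
    simp [norm_smul, hxn.ne']
  rw [hN.smul_eq, abs_of_pos (inv_pos.2 hxn)] at h1
  rw [le_div_iff₀ hpos]
  have h2 : ‖x‖ * N y ≤ ‖x‖ * (‖x‖⁻¹ * N x) := mul_le_mul_of_nonneg_left h1 hxn.le
  rw [← mul_assoc, mul_inv_cancel₀ hxn.ne', one_mul] at h2
  exact h2.trans hx

lemma continuous_ip (v : Fin n → ℝ) : Continuous (fun x => ip B v x) := by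
  unfold ip
  fun_prop

/-- The dual norm is attained at an extreme point of the unit ball: the maximizers of `⟪v, ·⟫` form
a compact face, and an extreme point of a face is an extreme point of the ball. -/
lemma exists_extPt (hN : IsNorm N) (v : Fin n → ℝ) :
    ∃ a ∈ extPts N, (∀ x, N x ≤ 1 → ip B v x ≤ ip B v a) ∧ ip B v a = dualNorm B N v := by
  let l : StrongDual ℝ (Fin n → ℝ) :=
    ⟨Matrix.toBilin' B v, by
      have := continuous_ip (B := B) v
      simp only [ip_eq] at this
      exact this⟩
  have hl : ∀ x, l x = ip B v x := fun x => (ip_eq v x).symm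
  have hexp : IsExposed ℝ {x | N x ≤ 1}
      {x ∈ {x | N x ≤ 1} | ∀ y ∈ {x | N x ≤ 1}, l y ≤ l x} := fun _ => ⟨l, rfl⟩
  obtain ⟨x₁, hx₁, hmax⟩ := hN.isCompact_ball.exists_isMaxOn
    ⟨0, by simp [hN.zero]⟩ l.continuous.continuousOn
  obtain ⟨a, ha⟩ := (hexp.isCompact hN.isCompact_ball).extremePoints_nonempty
    ⟨x₁, hx₁, fun y hy => hmax hy⟩
  have hm : ∀ x, N x ≤ 1 → ip B v x ≤ ip B v a := fun x hx => by
    have := ha.1.2 x hx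
    rwa [hl, hl] at this
  refine ⟨a, hexp.isExtreme.extremePoints_subset_extremePoints ha, hm, ?_⟩
  have hg : IsGreatest ((fun x => ip B v x) '' {x | N x ≤ 1}) (ip B v a) :=
    ⟨⟨a, ha.1.1, rfl⟩, by rintro _ ⟨x, hx, rfl⟩; exact hm x hx⟩
  exact hg.csSup_eq.symm

lemma extPts_le_one {a : Fin n → ℝ} (ha : a ∈ extPts N) : N a ≤ 1 := ha.1

lemma ip_le_dual (hN : IsNorm N) (y x : Fin n → ℝ) : ip B y x ≤ dualNorm B N y * N x := by
  obtain ⟨a, _, hmax, hval⟩ := exists_extPt (B := B) hN y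
  rw [← hval]
  by_cases hx : x = 0
  · simp [hx, ip_zero_right, hN.zero]
  have hpos : 0 < N x := lt_of_le_of_ne (hN.nonneg x)
    (fun h => hx ((hN.eq_zero_iff x).1 h.symm))
  have h := hmax ((N x)⁻¹ • x) (by
    rw [hN.smul_eq, abs_of_pos (inv_pos.2 hpos), inv_mul_cancel₀ hpos.ne'])
  rw [ip_smul_right, inv_mul_le_iff₀ hpos] at h
  linarith

lemma dual_nonneg (hN : IsNorm N) (y : Fin n → ℝ) : 0 ≤ dualNorm B N y := by
  obtain ⟨a, _, hmax, hval⟩ := exists_extPt (B := B) hN y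
  rw [← hval]
  have := hmax 0 (by simp [hN.zero])
  rwa [ip_zero_right] at this

lemma dual_le_one_iff (hN : IsNorm N) (y : Fin n → ℝ) :
    dualNorm B N y ≤ 1 ↔ ∀ u, ip B y u ≤ N u := by
  constructor
  · intro h u
    have h1 := ip_le_dual (B := B) hN y u
    have h2 := mul_le_mul_of_nonneg_right h (hN.nonneg u)
    linarith
  · intro h
    obtain ⟨a, ha, _, hval⟩ := exists_extPt (B := B) hN y
    rw [← hval]
    exact (h a).trans (extPts_le_one ha)

lemma dual_neg (hN : IsNorm N) {y : Fin n → ℝ} (h : ∀ u, ip B y u ≤ N u) :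
    ∀ u, ip B (-y) u ≤ N u := fun u => by
  have := h (-u)
  rwa [ip_neg_right, hN.neg, ← ip_neg_left] at this

lemma mem_subdiff_iff (hN : IsNorm N) (x ξ : Fin n → ℝ) :
    ξ ∈ subdiff B N x ↔ (∀ u, ip B ξ u ≤ N u) ∧ ip B ξ x = N x := by
  constructor
  · intro h
    have hu : ∀ u, ip B ξ u ≤ N u := fun u => by
      have h1 := h (x + u)
      have h2 := hN.triangle x u
      rw [add_sub_cancel_left] at h1
      linarith
    refine ⟨hu, le_antisymm (hu x) ?_⟩
    have h1 := h 0
    rw [zero_sub, ip_neg_right, hN.zero] at h1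
    linarith
  · rintro ⟨h1, h2⟩ y
    rw [ip_sub_right, h2]
    linarith [h1 y]

/-- Since the dual norm is attained at an extreme point `a` with `‖a‖ᵤ = 1`, one has
`‖x‖ᵤ² ≤ N x ⟪x, a⟫ ≤ N x ‖x‖ᵤ`. -/
lemma normu_le (hB : B.PosDef) (hN : IsNorm N) (hExt : ∀ a ∈ extPts N, normu B a = 1)
    (x : Fin n → ℝ) : normu B x ≤ N x := by
  obtain ⟨a, ha, _, hval⟩ := exists_extPt (B := B) hN x
  have h1 := ip_le_dual (B := B) hN x x
  rw [← hval, ← normu_sq hB] at h1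
  have h2 := ip_le_normu hB x a
  rw [hExt a ha, mul_one] at h2
  by_contra! hlt
  have h3 := mul_le_mul_of_nonneg_right h2 (hN.nonneg x)
  have h4 := hN.nonneg x
  nlinarith

end Norms

/-! ### Decomposable norms -/

section Decomp

variable {B : Matrix (Fin n) (Fin n) ℝ} {N : (Fin n → ℝ) → ℝ}

lemma mem_subdiff_add (hN : IsNorm N) (D : DecompStruct B N) (x : Fin n → ℝ)
    {v : Fin n → ℝ} (hv : v ∈ perp B (D.T x)) (hd : ∀ u, ip B v u ≤ N u) :
    D.e x + v ∈ subdiff B N x := by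
  rw [D.subdiff_eq]
  exact ⟨v, hv, (dual_le_one_iff hN v).2 hd, rfl⟩

lemma e_mem_subdiff (hN : IsNorm N) (D : DecompStruct B N) (x : Fin n → ℝ) :
    D.e x ∈ subdiff B N x := by
  have := mem_subdiff_add hN D x (v := 0) (fun u _ => ip_zero_right u)
    (fun u => by rw [ip_zero_left]; exact hN.nonneg u)
  simpa using this

lemma exists_perp_of_mem_subdiff (D : DecompStruct B N) {x ξ : Fin n → ℝ}
    (h : ξ ∈ subdiff B N x) :
    ∃ v ∈ perp B (D.T x), ξ = D.e x + v := by
  rw [D.subdiff_eq] at h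
  obtain ⟨v, hv, _, rfl⟩ := h
  exact ⟨v, hv, rfl⟩

lemma ext_dual (hB : B.PosDef) (hN : IsNorm N) (hExt : ∀ a ∈ extPts N, normu B a = 1)
    {a : Fin n → ℝ} (ha : a ∈ extPts N) (u : Fin n → ℝ) : ip B a u ≤ N u := by
  have h1 := ip_le_normu hB a u
  rw [hExt a ha, one_mul] at h1
  exact h1.trans (normu_le hB hN hExt u)

lemma ext_N (hB : B.PosDef) (hN : IsNorm N) (hExt : ∀ a ∈ extPts N, normu B a = 1)
    {a : Fin n → ℝ} (ha : a ∈ extPts N) : N a = 1 :=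
  le_antisymm (extPts_le_one ha) (by rw [← hExt a ha]; exact normu_le hB hN hExt a)

/-- Both `a` and `e a` are subgradients at `a`, so `a - e a` is orthogonal to `a`; it is also
orthogonal to `e a`, hence it vanishes. -/
lemma ext_e (hB : B.PosDef) (hN : IsNorm N) (hExt : ∀ a ∈ extPts N, normu B a = 1)
    (D : DecompStruct B N) {a : Fin n → ℝ} (ha : a ∈ extPts N) : D.e a = a := by
  have haa : ip B a a = 1 := by rw [← normu_sq hB, hExt a ha, one_pow]
  have hmem : a ∈ subdiff B N a :=
    (mem_subdiff_iff hN a a).2 ⟨ext_dual hB hN hExt ha, by rw [haa, ext_N hB hN hExt ha]⟩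
  obtain ⟨v, hv, hav⟩ := exists_perp_of_mem_subdiff D hmem
  have h1 := ((mem_subdiff_iff hN _ _).1 (e_mem_subdiff hN D a)).2
  rw [ext_N hB hN hExt ha] at h1
  have h2 : ip B v (D.e a) = 0 := by rw [ip_comm hB]; exact hv _ (D.e_mem a)
  have h3 : ip B (D.e a + v) a = 1 := by rw [← hav, haa]
  have h4 : ip B v (D.e a + v) = 0 := by
    rw [← hav]
    rw [ip_add_left, h1] at h3
    linarith
  rw [ip_add_right, h2, zero_add] at h4
  have h5 := eq_zero_of_ip_self hB h4
  rw [h5, add_zero] at hav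
  exact hav.symm

/-- An extreme point at which a vector `v ∈ (T x)ᗮ` of dual norm one attains its dual norm lies
in `(T x)ᗮ`. -/
lemma maximizer_mem_perp (hB : B.PosDef) (hN : IsNorm N)
    (hExt : ∀ a ∈ extPts N, normu B a = 1) (D : DecompStruct B N) (x : Fin n → ℝ)
    {v a : Fin n → ℝ} (hv : v ∈ perp B (D.T x)) (hd : ∀ u, ip B v u ≤ N u)
    (ha : a ∈ extPts N) (hva : ip B v a = 1) : a ∈ perp B (D.T x) := by
  have hNa := ext_N hB hN hExt ha
  have hea := ext_e hB hN hExt D ha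
  obtain ⟨he, hex⟩ := (mem_subdiff_iff hN _ _).1 (e_mem_subdiff hN D x)
  have hp := ((mem_subdiff_iff hN _ _).1 (mem_subdiff_add hN D x hv hd)).1
  have hm := ((mem_subdiff_iff hN _ _).1
    (mem_subdiff_add hN D x (mem_perp_neg hv) (dual_neg hN hd))).1
  -- The vectors `±e x + v` are in the dual ball and `⟪v, a⟫ = 1`, so `⟪e x, a⟫ = 0`.
  have hea0 : ip B (D.e x) a = 0 := by
    have h1 := hp a
    have h2 := hm (-a)
    rw [hN.neg] at h2
    simp only [ip_add_left, ip_neg_left, ip_neg_right, hva, hNa] at h1 h2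
    linarith
  -- Two subgradients at `a` differ by an element of `(T a)ᗮ`.
  have hperp : D.e x ∈ perp B (D.T a) := by
    have hva' : v ∈ subdiff B N a := (mem_subdiff_iff hN _ _).2 ⟨hd, by rw [hva, hNa]⟩
    have hva'' : D.e x + v ∈ subdiff B N a :=
      (mem_subdiff_iff hN _ _).2 ⟨hp, by rw [ip_add_left, hva, hNa, hea0, zero_add]⟩
    obtain ⟨v1, hv1, h1⟩ := exists_perp_of_mem_subdiff D hva'
    obtain ⟨v2, hv2, h2⟩ := exists_perp_of_mem_subdiff D hva''
    have : D.e x = v2 + -v1 := by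
      have : D.e x = (D.e x + v) - v := by abel
      rw [this, h2, h1]; abel
    rw [this]
    exact mem_perp_add hv2 (mem_perp_neg hv1)
  have hplus := ((mem_subdiff_iff hN _ _).1 (mem_subdiff_add hN D a hperp he)).1
  have hminus := ((mem_subdiff_iff hN _ _).1
    (mem_subdiff_add hN D a (mem_perp_neg hperp) (dual_neg hN he))).1
  rw [hea] at hplus hminus
  have hax : ip B a x = 0 := by
    have h1 := hplus x
    have h2 := hminus (-x)
    rw [hN.neg] at h2
    simp only [ip_add_left, ip_neg_left, ip_neg_right, hex] at h1 h2
    linarith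
  have hmem : a + D.e x ∈ subdiff B N x :=
    (mem_subdiff_iff hN _ _).2 ⟨hplus, by rw [ip_add_left, hax, hex, zero_add]⟩
  obtain ⟨v', hv', h'⟩ := exists_perp_of_mem_subdiff D hmem
  have : a = v' := by
    rw [add_comm] at h'
    exact add_left_cancel h'
  rwa [this]

/-- The orthogonal projection onto `(T x)ᗮ` maps the dual unit ball into itself. -/
lemma proj_dual_le (hB : B.PosDef) (hN : IsNorm N)
    (hExt : ∀ a ∈ extPts N, normu B a = 1) (D : DecompStruct B N) (x : Fin n → ℝ)
    {s v : Fin n → ℝ} (hs : s ∈ D.T x) (hv : v ∈ perp B (D.T x))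
    (hd : ∀ u, ip B (s + v) u ≤ N u) : ∀ u, ip B v u ≤ N u := by
  rw [← dual_le_one_iff hN]
  by_contra! hlt
  obtain ⟨a, ha, _, hval⟩ := exists_extPt (B := B) hN v
  have hpos : 0 < dualNorm B N v := by linarith
  have haT : a ∈ perp B (D.T x) := by
    refine maximizer_mem_perp hB hN hExt D x (v := (dualNorm B N v)⁻¹ • v)
      (mem_perp_smul _ hv) ?_ ha ?_
    · intro u
      rw [ip_smul_left, inv_mul_le_iff₀ hpos]
      exact ip_le_dual hN v u
    · rw [ip_smul_left, hval, inv_mul_cancel₀ hpos.ne']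
  have h1 := hd a
  rw [ip_add_left, haT s hs, zero_add, hval] at h1
  linarith [extPts_le_one ha]

lemma exists_perp_norming (hB : B.PosDef) (hN : IsNorm N)
    (hExt : ∀ a ∈ extPts N, normu B a = 1) (D : DecompStruct B N) (x : Fin n → ℝ)
    {w : Fin n → ℝ} (hw : w ∈ perp B (D.T x)) :
    ∃ v ∈ perp B (D.T x), (∀ u, ip B v u ≤ N u) ∧ ip B v w = N w := by
  obtain ⟨hy, hyw⟩ := (mem_subdiff_iff hN _ _).1 (e_mem_subdiff hN D w)
  obtain ⟨s, hs, v, hv, hsv⟩ := exists_decomp hB (D.T x) (D.e w)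
  rw [hsv] at hy hyw
  refine ⟨v, hv, proj_dual_le hB hN hExt D x hs hv hy, ?_⟩
  rwa [ip_add_left, hw s hs, zero_add] at hyw

/-- If `e x = 0` then `x = 0`, and `∂N(0)` is the whole dual ball, so `T x = 0`. -/
lemma e_ne_zero (hB : B.PosDef) (hN : IsNorm N) (D : DecompStruct B N) (x : Fin n → ℝ)
    {u : Fin n → ℝ} (hu : u ∈ D.T x) (hu0 : u ≠ 0) : D.e x ≠ 0 := by
  intro he
  have hx := ((mem_subdiff_iff hN _ _).1 (e_mem_subdiff hN D x)).2
  rw [he, ip_zero_left] at hx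
  have hx0 : x = 0 := (hN.eq_zero_iff x).1 hx.symm
  obtain ⟨hy, hyu⟩ := (mem_subdiff_iff hN _ _).1 (e_mem_subdiff hN D u)
  have hmem : D.e u ∈ subdiff B N x :=
    (mem_subdiff_iff hN _ _).2 ⟨hy, by rw [hx0, ip_zero_right, hN.zero]⟩
  obtain ⟨v, hv, h⟩ := exists_perp_of_mem_subdiff D hmem
  rw [he, zero_add] at h
  have h0 := hv u hu
  rw [← h, ip_comm hB, hyu] at h0
  exact hu0 ((hN.eq_zero_iff u).1 h0)

end Decomp

/-! ### The estimate -/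

lemma sq2_nonneg (v : Fin m → ℝ) : 0 ≤ sq2 v := by
  unfold sq2 dotProduct
  exact Finset.sum_nonneg fun i _ => mul_self_nonneg (v i)

lemma fls_diff (A : Matrix (Fin m) (Fin n) ℝ) (x₀ x : Fin n → ℝ)
    (z : Fin m → ℝ) :
    fls A (A.mulVec x₀ + z) x - fls A (A.mulVec x₀ + z) x₀ =
      (1 / 2) * sq2 (A.mulVec (x - x₀)) - dotProduct (A.mulVec (x - x₀)) z := by
  have h1 : A.mulVec x - (A.mulVec x₀ + z) = A.mulVec (x - x₀) - z := by
    rw [mulVec_sub]; abel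
  have h2 : A.mulVec x₀ - (A.mulVec x₀ + z) = -z := by abel
  unfold fls sq2
  rw [h1, h2]
  simp only [sub_dotProduct, dotProduct_sub, dotProduct_neg, neg_dotProduct]
  rw [dotProduct_comm z (A.mulVec (x - x₀))]
  ring

/-- The scalar part of the argument. Here `a = ‖A h‖²`, `H = N h`, `t` and `w` are the norms of the
components of `h` in `T x₀` and its complement, `p = ⟪e x₀, h⟫`, `U = ‖h‖ᵤ²`, `P = c k₀`,
`ε = ‖A*z‖*`. -/
lemma scalar_bound {a H t w p U P ε lt lam δ γ ρ : ℝ} (hP : 0 ≤ P)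
    (ha : 0 ≤ a) (ht : 0 ≤ t) (hρ : 0 < ρ) (hδ : 0 < δ) (hδ4 : δ ≤ 1 / 4)
    (hlt : 0 < lt) (hlam : lt ≤ lam) (hε : 0 ≤ ε) (hε4 : ε ≤ lt / 4)
    (hγ : γ = (lt * (1 + δ) + ε) / (lt * (1 - δ) - ε))
    (hH : 0 ≤ H) (hw : 0 ≤ w) (hHtw : H ≤ t + w) (hpt : -p ≤ t) (hpH : -p ≤ H)
    (htU : t ^ 2 ≤ P * U)
    (hrip : H ^ 2 ≤ P * (1 + γ) ^ 2 * U → ρ * U ≤ a)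
    (hmain : (1 / 2) * a + lam * (p + w) ≤
      3 * P * δ * lam ^ 2 * (1 + γ) / (2 * ρ) + ε * H) :
    max ((1 / (2 * lam)) * a) H ≤ 9 * P * lam * (1 + γ) / (2 * ρ) := by
  have hlam0 : 0 < lam := by linarith
  have hd : 0 < lt * (1 - δ) - ε := by nlinarith
  have hγd : γ * (lt * (1 - δ) - ε) = lt * (1 + δ) + ε := by
    rw [hγ, div_mul_cancel₀ _ hd.ne']
  have hγ0 : 0 ≤ γ := by
    rw [hγ]; apply div_nonneg _ hd.le; positivity
  set Y : ℝ := P * lam * (1 + γ) / ρ with hY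
  have hY0 : 0 ≤ Y := by positivity
  have hgoal : 9 * P * lam * (1 + γ) / (2 * ρ) = 9 / 2 * Y := by
    rw [hY]; field_simp
  have hΔ : 3 * P * δ * lam ^ 2 * (1 + γ) / (2 * ρ) = 3 / 2 * (δ * lam * Y) := by
    rw [hY]; field_simp
  rw [hΔ] at hmain
  rw [hgoal]
  have hfin : ∀ q, a ≤ 2 * lam * q → 1 / (2 * lam) * a ≤ q := fun q hq => by
    rw [one_div, inv_mul_le_iff₀ (by positivity)]
    exact hq
  by_cases hcase : 3 / 2 * (δ * lam * Y) ≤ δ * lam * H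
  · have hdl : 0 < lam * (1 - δ) - ε := by nlinarith
    have hkey : (1 / 2) * a + (lam * (1 - δ) - ε) * w ≤ (lam * (1 + δ) + ε) * t := by
      have h1 : (δ * lam + ε) * H ≤ (δ * lam + ε) * (t + w) :=
        mul_le_mul_of_nonneg_left hHtw (by positivity)
      have h2 : lam * (-p) ≤ lam * t := mul_le_mul_of_nonneg_left hpt hlam0.le
      nlinarith
    have hγ1 : 1 + δ ≤ γ * (1 - δ) := by
      have : lt * (1 + δ) ≤ lt * (γ * (1 - δ)) := by
        nlinarith [mul_nonneg hγ0 hε]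
      exact le_of_mul_le_mul_left this hlt
    have hcoef : lam * (1 + δ) + ε ≤ γ * (lam * (1 - δ) - ε) := by
      nlinarith [mul_le_mul_of_nonneg_left hγ1 (sub_nonneg.2 hlam)]
    have hle : lam * (1 + δ) + ε ≤ 3 / 2 * lam := by nlinarith
    have hwt : w ≤ γ * t := by
      have h1 : (lam * (1 - δ) - ε) * w ≤ (lam * (1 - δ) - ε) * (γ * t) := by
        linarith [mul_le_mul_of_nonneg_right hcoef ht]
      exact le_of_mul_le_mul_left h1 hdl
    have hHt : H ≤ (1 + γ) * t := by linarith
    have ha3 : a ≤ 3 * lam * t := by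
      linarith [mul_le_mul_of_nonneg_right hle ht, mul_nonneg hdl.le hw]
    have hU : ρ * U ≤ a := by
      apply hrip
      calc H ^ 2 ≤ ((1 + γ) * t) ^ 2 := pow_le_pow_left₀ hH hHt 2
        _ = (1 + γ) ^ 2 * t ^ 2 := by ring
        _ ≤ (1 + γ) ^ 2 * (P * U) := mul_le_mul_of_nonneg_left htU (by positivity)
        _ = P * (1 + γ) ^ 2 * U := by ring
    have hquad : t * (ρ * t) ≤ t * (3 * P * lam) := by
      linarith [mul_le_mul_of_nonneg_left htU hρ.le,
        mul_le_mul_of_nonneg_left (hU.trans ha3) hP]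
    have htb : ρ * t ≤ 3 * P * lam := by
      rcases ht.eq_or_lt with h0 | h0
      · rw [← h0, mul_zero]; positivity
      · exact le_of_mul_le_mul_left hquad h0
    have hY3 : (1 + γ) * t ≤ 3 * Y := by
      have h1 : t ≤ 3 * P * lam / ρ := by
        rw [le_div_iff₀ hρ]; linarith
      calc (1 + γ) * t ≤ (1 + γ) * (3 * P * lam / ρ) :=
            mul_le_mul_of_nonneg_left h1 (by positivity)
        _ = 3 * Y := by rw [hY]; ring
    refine max_le (hfin _ ?_) (by linarith)
    have h1 : t ≤ 3 * Y := by linarith [mul_nonneg hγ0 ht]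
    linarith [mul_le_mul_of_nonneg_left h1 hlam0.le]
  · push Not at hcase
    have hHY : H < 3 / 2 * Y := by
      have : δ * lam * H < δ * lam * (3 / 2 * Y) := by linarith
      exact lt_of_mul_lt_mul_left this (by positivity)
    refine max_le (hfin _ ?_) (by linarith)
    have h1 : lam * (-p) ≤ lam * H := mul_le_mul_of_nonneg_left hpH hlam0.le
    have h2 : lam * H ≤ lam * (3 / 2 * Y) := mul_le_mul_of_nonneg_left hHY.le hlam0.le
    have h3 : ε * H ≤ lam / 4 * H := mul_le_mul_of_nonneg_right (by linarith) hH
    have h4 : δ * (lam * Y) ≤ 1 / 4 * (lam * Y) :=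
      mul_le_mul_of_nonneg_right hδ4 (by positivity)
    have h5 : 0 ≤ lam * w := by positivity
    linarith [mul_nonneg hlam0.le hY0]

/-- **Lemma 2.** Under Assumption 1 and `λ ≥ λ_tgt`, if the objective gap of
`x` relative to `x₀` is at most `3 c k₀ δ λ² (1+γ) / (2 ρ₋(A, c (1+γ)² k₀))`, then both
`(1/(2λ)) ‖A (x - x₀)‖₂²` and `‖x - x₀‖` are at most
`9 c k₀ λ (1+γ) / (2 ρ₋(A, c (1+γ)² k₀))`. -/
theorem lemma_two {n m : ℕ}
    (B : Matrix (Fin n) (Fin n) ℝ) (hB : B.PosDef)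
    (N : (Fin n → ℝ) → ℝ) (hN : IsNorm N)
    (hExt : ∀ a ∈ extPts N, normu B a = 1)
    (D : DecompStruct B N)
    (A : Matrix (Fin m) (Fin n) ℝ) (x₀ : Fin n → ℝ) (z b : Fin m → ℝ)
    (hb : b = A.mulVec x₀ + z)
    (k₀ : ℝ) (hk₀ : k₀ = Kfun B N D x₀)
    (c : ℝ)
    (hc : IsGreatest {ρ : ℝ | ∃ u ∈ D.T x₀, u ≠ 0 ∧
      ρ = (N u) ^ 2 / (k₀ * (normu B u) ^ 2)} c)
    (γinc lamtgt r δ γ ρlow ρlow2 ρup2 : ℝ)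
    (hγinc : 1 < γinc) (hlamtgt : 0 < lamtgt)
    (hA1 : Assumption1 B N A z c k₀ γinc lamtgt r δ γ ρlow ρlow2 ρup2)
    (lam : ℝ) (hlam : lamtgt ≤ lam)
    (x : Fin n → ℝ)
    (hgap : phi A b N lam x - phi A b N lam x₀ ≤
      3 * c * k₀ * δ * lam ^ 2 * (1 + γ) / (2 * ρlow)) :
    max ((1 / (2 * lam)) * sq2 (A.mulVec (x - x₀))) (N (x - x₀)) ≤
      9 * c * k₀ * lam * (1 + γ) / (2 * ρlow) := by
  obtain ⟨hz4, _, hδ, hδ4, hγ, ⟨hρ, hrip⟩, _, _, _⟩ := hA1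
  obtain ⟨t, ht, w, hw, htw⟩ := exists_decomp hB (D.T x₀) (x - x₀)
  obtain ⟨v, hv, hvd, hvw⟩ := exists_perp_norming hB hN hExt D x₀ hw
  obtain ⟨hed, hex⟩ := (mem_subdiff_iff hN _ _).1 (e_mem_subdiff hN D x₀)
  have hew : ip B (D.e x₀) w = 0 := hw _ (D.e_mem x₀)
  -- `k₀ > 0`, because the set defining `c` is nonempty and hence `T x₀ ≠ 0`.
  have hk₀pos : 0 < k₀ := by
    obtain ⟨u, hu, hu0, _⟩ := hc.1
    rw [hk₀, Kfun, normu_sq hB]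
    exact ip_self_pos hB (e_ne_zero hB hN D x₀ hu hu0)
  have hc0 : 0 ≤ c := by
    obtain ⟨u, _, _, h⟩ := hc.1
    rw [h]
    positivity
  have htc : N t ^ 2 ≤ c * k₀ * normu B t ^ 2 := by
    by_cases ht0 : t = 0
    · rw [ht0, hN.zero, zero_pow two_ne_zero]
      positivity
    · have h1 := hc.2 ⟨t, ht, ht0, rfl⟩
      have h2 : 0 < k₀ * normu B t ^ 2 := by
        rw [normu_sq hB]
        exact mul_pos hk₀pos (ip_self_pos hB ht0)
      rw [div_le_iff₀ h2] at h1
      linarith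
  -- The subgradient `e x₀ + v` bounds `N x - N x₀` from below.
  have hsub : N x₀ + (ip B (D.e x₀) (x - x₀) + N w) ≤ N x := by
    have h := mem_subdiff_add hN D x₀ hv hvd x
    have hvt : ip B v t = 0 := by rw [ip_comm hB]; exact hv t ht
    have hvh : ip B v (x - x₀) = N w := by
      rw [htw, ip_add_right, hvt, hvw, zero_add]
    rwa [ip_add_left, hvh] at h
  have hnoise : dotProduct (A.mulVec (x - x₀)) z ≤
      dualNorm B N ((Astar B A).mulVec z) * N (x - x₀) := by
    rw [← ip_Astar hB]
    exact ip_le_dual hN _ _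
  have hmain : (1 / 2) * sq2 (A.mulVec (x - x₀)) + lam * (ip B (D.e x₀) (x - x₀) + N w) ≤
      3 * (c * k₀) * δ * lam ^ 2 * (1 + γ) / (2 * ρlow) +
        dualNorm B N ((Astar B A).mulVec z) * N (x - x₀) := by
    have h1 := fls_diff A x₀ x z
    rw [← hb] at h1
    have h2 : phi A b N lam x - phi A b N lam x₀ =
        (fls A b x - fls A b x₀) + lam * (N x - N x₀) := by
      unfold phi; ring
    rw [h2, h1, show 3 * c * k₀ = 3 * (c * k₀) by ring] at hgap
    have h3 : lam * (ip B (D.e x₀) (x - x₀) + N w) ≤ lam * (N x - N x₀) :=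
      mul_le_mul_of_nonneg_left (by linarith) (by linarith)
    linarith
  have hfinal := scalar_bound (mul_nonneg hc0 hk₀pos.le)
    (sq2_nonneg (A.mulVec (x - x₀))) (hN.nonneg t) hρ hδ hδ4 hlamtgt hlam
    (dual_nonneg hN _) hz4 hγ (hN.nonneg (x - x₀)) (hN.nonneg w)
    (by rw [htw]; exact hN.triangle t w)
    (by
      rw [htw, ip_add_right, hew, add_zero, ← ip_neg_left]
      exact dual_neg hN hed t)
    (by rw [← ip_neg_left]; exact dual_neg hN hed _)
    (htc.trans (mul_le_mul_of_nonneg_left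
      (by rw [htw]; exact normu_le_of_orth hB (hw t ht)) (mul_nonneg hc0 hk₀pos.le)))
    (hrip (x - x₀)) hmain
  rwa [show 9 * (c * k₀) = 9 * c * k₀ by ring] at hfinal

end PGH
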